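/- Let G = (V, E) be a finite simple graph, let V′ ⊆ V, and let k ∈ ℕ. Then the following are equivalent: (1) for every clique C ⊆ V′ of G there exists a set D of k vertices such that C ∪ D is a clique of G of size |C| + k; (2) for every function α : V′ → Bool there exists a function β : V → Bool of weight k such that at least one of the following holds: (a) there exist distinct non-adjacent vertices u, w ∈ V′ with α(u) = α(w) = true; or (b) both of the following hold: for every v′ ∈ V′ it is not the case that α(v′) = true and β(v′) = true, and for every pair of distinct non-adjacent vertices u, w ∈ V it is not the case that sel(u) and sel(w) both hold, where sel(v) means β(v) = true or (v ∈ V′ and α(v) = true). -/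

import Mathlib

/-- The weight of a function into `Bool`: the number of arguments it maps to true. -/
def weight {X : Type} [Fintype X] (α : X → Bool) : ℕ :=
  (Finset.univ.filter fun x => α x = true).card

/-! Reading Boolean functions as sets, `α` encodes a set `C ⊆ V'` and `β` the set `D` of added
vertices. The only difference between the two sides is then that the formula also asks for a `D` of
size `k` when `C` is not a clique; extending the empty clique provides one. -/

/-- The set of arguments that a Boolean function maps to `true`, through which assignments are read
as vertex sets. -/
def trueSet {X : Type*} (f : X → Bool) : Set X :=
  {x | f x = true}

/-- The Small-Clique-Extension property: every clique contained in `S` can be enlarged to a clique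
by adding `k` new vertices. Newness is expressed by disjointness, since comparing cardinalities
does not express it for infinite cliques; `k = ⊤` asks for infinitely many vertices. -/
def HasCliqueExtensions {V : Type*} (G : SimpleGraph V) (S : Set V) (k : ℕ∞) : Prop :=
  ∀ C ⊆ S, G.IsClique C → ∃ D : Set V, D.encard = k ∧ Disjoint C D ∧ G.IsClique (C ∪ D)

theorem mem_trueSet {X : Type*} {f : X → Bool} {x : X} : x ∈ trueSet f ↔ f x = true :=
  Iff.rfl

theorem trueSet_surjective {X : Type*} :
    Function.Surjective (trueSet : (X → Bool) → Set X) := by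
  classical
  exact fun s => ⟨fun x => decide (x ∈ s), by simp [trueSet]⟩

theorem encard_trueSet {X : Type} [Fintype X] (f : X → Bool) :
    (trueSet f).encard = weight f := by
  rw [weight, ← Set.encard_coe_eq_coe_finsetCard, Finset.coe_filter_univ, trueSet]

theorem mem_image_val_trueSet {X : Type*} {S : Set X} {α : S → Bool} {x : X} :
    x ∈ Subtype.val '' trueSet α ↔ ∃ h : x ∈ S, α ⟨x, h⟩ = true := by
  simp [mem_trueSet]

theorem disjoint_image_val_trueSet_iff {X : Type*} {S : Set X} {α : S → Bool} {β : X → Bool} :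
    Disjoint (Subtype.val '' trueSet α) (trueSet β) ↔
      ∀ x : S, ¬ (α x = true ∧ β x = true) := by
  simp only [Set.disjoint_left, Set.forall_mem_image, mem_trueSet, not_and]

section Cliques

variable {V : Type*} {G : SimpleGraph V}

theorem isClique_iff_forall_not_adj {s : Set V} :
    G.IsClique s ↔ ∀ u w, u ≠ w → ¬ G.Adj u w → ¬ (u ∈ s ∧ w ∈ s) := by
  rw [SimpleGraph.isClique_iff, Set.Pairwise]
  exact ⟨fun hs u w huw hadj h => hadj (hs h.1 h.2 huw),
    fun hs u hu w hw huw => by_contra fun hadj => hs u w huw hadj ⟨hu, hw⟩⟩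

theorem not_isClique_image_val_trueSet_iff {S : Set V} {α : S → Bool} :
    ¬ G.IsClique (Subtype.val '' trueSet α) ↔
      ∃ u w : S, u ≠ w ∧ ¬ G.Adj u w ∧ α u = true ∧ α w = true := by
  rw [SimpleGraph.isClique_iff, Subtype.val_injective.injOn.pairwise_image, Set.Pairwise]
  simp only [mem_trueSet, Function.onFun]
  push Not
  exact ⟨fun ⟨u, hu, w, hw, huw, hadj⟩ => ⟨u, w, huw, hadj, hu, hw⟩,
    fun ⟨u, w, huw, hadj, hu, hw⟩ => ⟨u, hu, w, hw, huw, hadj⟩⟩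

theorem isClique_image_val_trueSet_union_iff {S : Set V} {α : S → Bool} {β : V → Bool} :
    G.IsClique (Subtype.val '' trueSet α ∪ trueSet β) ↔
      ∀ u w : V, u ≠ w → ¬ G.Adj u w →
        ¬ ((β u = true ∨ ∃ h : u ∈ S, α ⟨u, h⟩ = true) ∧
           (β w = true ∨ ∃ h : w ∈ S, α ⟨w, h⟩ = true)) := by
  simp only [isClique_iff_forall_not_adj, Set.union_comm _ (trueSet β), Set.mem_union,
    mem_trueSet, mem_image_val_trueSet]

theorem hasCliqueExtensions_iff_forall_subset {S : Set V} {k : ℕ∞} :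
    HasCliqueExtensions G S k ↔ ∀ C ⊆ S, ∃ D : Set V, D.encard = k ∧
      (¬ G.IsClique C ∨ Disjoint C D ∧ G.IsClique (C ∪ D)) := by
  constructor
  · intro hext C hCS
    by_cases hC : G.IsClique C
    · obtain ⟨D, hD, hCD⟩ := hext C hCS hC
      exact ⟨D, hD, Or.inr hCD⟩
    · obtain ⟨D, hD, -⟩ := hext ∅ S.empty_subset G.isClique_empty
      exact ⟨D, hD, Or.inl hC⟩
  · intro hext C hCS hC
    obtain ⟨D, hD, hCD⟩ := hext C hCS
    exact ⟨D, hD, hCD.resolve_left (not_not_intro hC)⟩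

theorem hasCliqueExtensions_iff_forall_finset [DecidableEq V] {S : Set V} (hS : S.Finite) {k : ℕ} :
    HasCliqueExtensions G S k ↔ ∀ C : Finset V, ↑C ⊆ S → G.IsClique (C : Set V) →
      ∃ D : Finset V, D.card = k ∧ (C ∪ D).card = C.card + k ∧
        G.IsClique ((C ∪ D : Finset V) : Set V) := by
  have card_union_iff {C D : Finset V} (hD : D.card = k) :
      (C ∪ D).card = C.card + k ↔ Disjoint (C : Set V) D := by
    rw [← hD, Finset.card_union_eq_card_add_card, Finset.disjoint_coe]
  constructor
  · intro hext C hCS hC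
    obtain ⟨D, hD, hdisj, hclique⟩ := hext C hCS hC
    lift D to Finset V using Set.finite_of_encard_eq_coe hD
    rw [Set.encard_coe_eq_coe_finsetCard, Nat.cast_inj] at hD
    exact ⟨D, hD, (card_union_iff hD).2 hdisj, by rwa [Finset.coe_union]⟩
  · intro hext C hCS hC
    lift C to Finset V using hS.subset hCS
    obtain ⟨D, hD, hcard, hclique⟩ := hext C hCS hC
    refine ⟨D, ?_, (card_union_iff hD).1 hcard, by rwa [← Finset.coe_union]⟩
    rw [Set.encard_coe_eq_coe_finsetCard, hD]

end Cliques

theorem statement7_general {V : Type*} (G : SimpleGraph V) (V' : Set V) (k : ℕ∞) :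
    HasCliqueExtensions G V' k ↔
      ∀ α : V' → Bool, ∃ β : V → Bool, (trueSet β).encard = k ∧
        ((∃ u w : V', u ≠ w ∧ ¬ G.Adj (u : V) (w : V) ∧ α u = true ∧ α w = true) ∨
         ((∀ v' : V', ¬ (α v' = true ∧ β (v' : V) = true)) ∧
          (∀ u w : V, u ≠ w → ¬ G.Adj u w →
            ¬ ((β u = true ∨ ∃ h : u ∈ V', α ⟨u, h⟩ = true) ∧
               (β w = true ∨ ∃ h : w ∈ V', α ⟨w, h⟩ = true))))) := by
  simp only [hasCliqueExtensions_iff_forall_subset, ← Subtype.forall_set_subtype,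
    trueSet_surjective.forall, trueSet_surjective.exists, not_isClique_image_val_trueSet_iff,
    disjoint_image_val_trueSet_iff, isClique_image_val_trueSet_union_iff]

/-- Correctness of the reduction showing membership of Small-Clique-Extension in the
class ∀*∃ᵏ-W[1]: every clique `C ⊆ V'` of `G` extends by `k` vertices to a clique of
size `|C| + k` iff for every `α : V' → Bool` there is a weight-`k` function
`β : V → Bool` such that either (a) `α` selects two distinct non-adjacent vertices
of `V'`, or (b) `β` is disjoint from the selection of `α` on `V'` and the set of all
selected vertices (by `β`, or by `α` within `V'`) is a clique. -/
theorem statement7 {V : Type} [Fintype V] [DecidableEq V]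
    (G : SimpleGraph V) (V' : Set V) (k : ℕ) :
    ((∀ C : Finset V, ↑C ⊆ V' → G.IsClique (C : Set V) →
        ∃ D : Finset V, D.card = k ∧ (C ∪ D).card = C.card + k ∧
          G.IsClique ((C ∪ D : Finset V) : Set V)) ↔
      (∀ α : V' → Bool, ∃ β : V → Bool, weight β = k ∧
        ((∃ u w : V', u ≠ w ∧ ¬ G.Adj (u : V) (w : V) ∧ α u = true ∧ α w = true) ∨
         ((∀ v' : V', ¬ (α v' = true ∧ β (v' : V) = true)) ∧
          (∀ u w : V, u ≠ w → ¬ G.Adj u w →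
            ¬ ((β u = true ∨ ∃ h : u ∈ V', α ⟨u, h⟩ = true) ∧
               (β w = true ∨ ∃ h : w ∈ V', α ⟨w, h⟩ = true))))))) := by
  rw [← hasCliqueExtensions_iff_forall_finset V'.toFinite, statement7_general]
  simp only [encard_trueSet, Nat.cast_inj]
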